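/- arXiv:2102.02708 — 4 statements merged into one kernel-verified Lean document; each statement's English description precedes it below -/
import Mathlib

section
/- Let p ∈ ℂ[z₁,…,zₙ] be a multiaffine Γ_α-stable polynomial for some α ∈ (0,2]. Then for every i ∈ [n], the partial derivative ∂p/∂z_i is either identically zero or Γ_α-stable. -/
open MvPolynomial

/-- A complex polynomial is `Γ_α`-stable if it does not vanish when all variables are
assigned values in the open sector of aperture `απ` centered on the positive real axis. -/
def SectorStable {n : ℕ} (α : ℝ) (g : MvPolynomial (Fin n) ℂ) : Prop :=
  ∀ z : Fin n → ℂ, (∀ i, z i ≠ 0 ∧ |(z i).arg| < α * Real.pi / 2) →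
    MvPolynomial.eval z g ≠ 0

/-!
If `p` is affine in `z_i`, then `p = q + z_i r` with `r = ∂p/∂z_i`, and neither `q` nor `r` involves
`z_i`. Suppose that `r ≠ 0` vanishes at a point `w` of the region. Then `q(w) = p(w) ≠ 0`, and on
some complex line through `w` the quotient `r / q` is analytic and nonconstant near `w`. By the open
mapping theorem it takes the values `-1/x`, for all large `x`, at points of the line close to `w`.
An `x` in the sector, which is unbounded, then yields a zero `q + x r = 0` of `p` in the region.
-/

open Filter Topology Bornology Function

section AffineInOneVariable

variable {σ R : Type*} [DecidableEq σ]

lemma eval_update_monomial [CommSemiring R] (z : σ → R) (i : σ) (x : R) (m : σ →₀ ℕ) (c : R) :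
    eval (update z i x) (monomial m c) = eval z (monomial (m.erase i) c) * x ^ m i := by
  have eval_erase : eval (update z i x) (monomial (m.erase i) c) =
      eval z (monomial (m.erase i) c) := by
    simp only [eval_monomial]
    congr 1
    refine Finsupp.prod_congr fun j hj ↦ ?_
    rw [update_of_ne (by rintro rfl; simp at hj)]
  conv_lhs => rw [← m.erase_add_single i, ← mul_one c, ← monomial_mul, map_mul, eval_erase]
  simp [eval_monomial]

lemma eval_update_of_degreeOf_le_one [CommRing R] {p : MvPolynomial σ R} {i : σ}
    (hp : p.degreeOf i ≤ 1) (z : σ → R) (x : R) :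
    eval (update z i x) p =
      eval z (p - X i * pderiv i p) + x * eval z (pderiv i p) := by
  have eval_term : ∀ m ∈ p.support, eval (update z i x) (monomial m (p.coeff m)) =
      eval z (monomial m (p.coeff m)) +
        (x - z i) * eval z (pderiv i (monomial m (p.coeff m))) := by
    intro m hm
    have eval_self := eval_update_monomial z i (z i) m (p.coeff m)
    rw [update_eq_self] at eval_self
    rw [eval_update_monomial, eval_self, pderiv_monomial]
    rcases Nat.le_one_iff_eq_zero_or_eq_one.1 (degreeOf_le_iff.1 hp m hm) with h | h
    · simp [h]
    · have erase_eq : m - Finsupp.single i 1 = m.erase i := by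
        rw [← h, tsub_eq_of_eq_add (m.erase_add_single i).symm]
      rw [erase_eq, h, Nat.cast_one, mul_one]
      ring
  have eval_sum : eval (update z i x) p = eval z p + (x - z i) * eval z (pderiv i p) := by
    conv_lhs => rw [p.as_sum]
    conv_rhs => rw [p.as_sum]
    simp only [map_sum]
    rw [Finset.sum_congr rfl eval_term, Finset.sum_add_distrib, Finset.mul_sum]
  rw [eval_sum, map_sub, map_mul, eval_X]
  ring

end AffineInOneVariable

section Lines

variable {σ R : Type*}

-- Finite support of `v` keeps `w + t v`, `t` small, in a product of infinitely many open sets.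
lemma exists_finsupp_eval_add_ne_zero [CommRing R] [IsDomain R] [Infinite R]
    {p : MvPolynomial σ R} (hp : p ≠ 0) (w : σ → R) : ∃ v : σ →₀ R, eval (w + ⇑v) p ≠ 0 := by
  obtain ⟨a, ha⟩ : ∃ a : σ → R, eval a p ≠ 0 := by
    by_contra! h
    exact hp (MvPolynomial.funext fun a ↦ by rw [h a, map_zero])
  refine ⟨Finsupp.indicator p.vars fun j _ ↦ a j - w j, ?_⟩
  convert ha using 1
  refine eval₂Hom_congr' rfl (fun j hj _ ↦ ?_) rfl
  simp [Finsupp.indicator_of_mem hj]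

lemma eventually_add_smul_mem_pi [TopologicalSpace R] [Semiring R] [IsTopologicalSemiring R]
    {w : σ → R} {J : Set σ} {U : σ → Set R} (hU : ∀ j ∈ J, U j ∈ 𝓝 (w j)) (v : σ →₀ R) :
    ∀ᶠ t : R in 𝓝 0, w + t • ⇑v ∈ J.pi U := by
  have hsupport : ∀ᶠ t : R in 𝓝 0, ∀ j ∈ v.support, j ∈ J → w j + t * v j ∈ U j := by
    refine v.support.eventually_all.2 fun j _ ↦ eventually_imp_distrib_left.2 fun hj ↦ ?_
    have hline : Tendsto (fun t : R ↦ w j + t * v j) (𝓝 0) (𝓝 (w j)) :=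
      Continuous.tendsto' (by fun_prop) _ _ (by simp)
    exact hline (hU j hj)
  filter_upwards [hsupport] with t ht j hj
  by_cases hv : j ∈ v.support
  · exact ht j hv hj
  · simpa [Finsupp.notMem_support_iff.1 hv] using mem_of_mem_nhds (hU j hj)

lemma analyticOnNhd_eval_add_smul (p : MvPolynomial σ ℂ) (w v : σ → ℂ) :
    AnalyticOnNhd ℂ (fun t : ℂ ↦ eval (w + t • v) p) Set.univ :=
  AnalyticOnNhd.aeval_mvPolynomial
    (fun _ ↦ analyticOnNhd_const.add (analyticOnNhd_id.mul analyticOnNhd_const)) p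

lemma frequently_eval_add_smul_ne_zero {p : MvPolynomial σ ℂ} {w v : σ → ℂ}
    (h : eval (w + v) p ≠ 0) : ∃ᶠ t : ℂ in 𝓝 0, eval (w + t • v) p ≠ 0 := by
  intro hzero
  have hone := (analyticOnNhd_eval_add_smul p w v).eqOn_zero_of_preconnected_of_eventuallyEq_zero
    isPreconnected_univ (Set.mem_univ 0) (hzero.mono fun _ ↦ not_not.1) (Set.mem_univ 1)
  exact h (by simpa using hone)

end Lines

section OpenMapping

variable {E : Type*} [NormedAddCommGroup E] [NormedSpace ℂ E] {q r : E → ℂ} {w : E}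

lemma nhds_zero_le_map_div_of_analyticAt (hq : AnalyticAt ℂ q w) (hr : AnalyticAt ℂ r w)
    (hqw : q w ≠ 0) (hrw : r w = 0) (hr_ne : ∃ᶠ z in 𝓝 w, r z ≠ 0) :
    𝓝 0 ≤ map (r / q) (𝓝 w) := by
  rcases (hr.div hq hqw).eventually_constant_or_nhds_le_map_nhds with hconst | hopen
  · refine absurd ?_ hr_ne
    filter_upwards [hconst, hq.continuousAt.eventually_ne hqw] with z hz hqz
    simpa [hrw, hqz] using hz
  · simpa [hrw] using hopen

lemma exists_add_mul_eq_zero_of_analyticAt (hq : AnalyticAt ℂ q w) (hr : AnalyticAt ℂ r w)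
    (hqw : q w ≠ 0) (hrw : r w = 0) (hr_ne : ∃ᶠ z in 𝓝 w, r z ≠ 0)
    {V : Set E} (hV : V ∈ 𝓝 w) {U : Set ℂ} (hU : ¬IsBounded U) :
    ∃ z ∈ V, ∃ x ∈ U, q z + x * r z = 0 := by
  have hV_ne : ∀ᶠ z in 𝓝 w, z ∈ V ∧ q z ≠ 0 :=
    Filter.Eventually.and hV (hq.continuousAt.eventually_ne hqw)
  have hvalues : ∀ᶠ y in 𝓝 0, ∃ z, (z ∈ V ∧ q z ≠ 0) ∧ r z / q z = y :=
    nhds_zero_le_map_div_of_analyticAt hq hr hqw hrw hr_ne (image_mem_map hV_ne)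
  have hneg_inv : Tendsto (fun x : ℂ ↦ -x⁻¹) (cobounded ℂ) (𝓝 0) := by
    simpa using (tendsto_inv₀_cobounded (α := ℂ)).neg
  have hfreq : ∃ᶠ x in cobounded ℂ, x ∈ U := fun h ↦ hU (isBounded_def.2 h)
  obtain ⟨x, hxU, ⟨z, ⟨hzV, hqz⟩, hzx⟩, hx⟩ :=
    (hfreq.and_eventually
      ((hneg_inv.eventually hvalues).and (eventually_ne_cobounded 0))).exists
  refine ⟨z, hzV, x, hxU, ?_⟩
  have hr_eq : r z = -x⁻¹ * q z := (div_eq_iff hqz).1 hzx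
  rw [hr_eq, neg_mul, mul_neg, mul_inv_cancel_left₀ hx, add_neg_cancel]

end OpenMapping

section Sector

/-- The open sector `Γ_α` of aperture `απ` centered on the positive real axis, stated as a set so
that `SectorStable α` unfolds to nonvanishing at the points with all coordinates in it. -/
def openSector (α : ℝ) : Set ℂ :=
  {z | z ≠ 0 ∧ |z.arg| < α * Real.pi / 2}

-- `arg` jumps across the negative real axis, but `|arg z|` is the unoriented angle from `1` to `z`.
lemma continuousOn_abs_arg : ContinuousOn (fun z : ℂ ↦ |z.arg|) {0}ᶜ := by
  have hangle : ContinuousOn (fun z : ℂ ↦ InnerProductGeometry.angle 1 z) {0}ᶜ := fun z hz ↦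
    ((InnerProductGeometry.continuousAt_angle (x := ((1 : ℂ), z)) one_ne_zero hz).comp
      (Continuous.prodMk_right (1 : ℂ)).continuousAt).continuousWithinAt
  exact hangle.congr fun z hz ↦ (Complex.angle_one_left hz).symm

lemma isOpen_openSector (α : ℝ) : IsOpen (openSector α) :=
  continuousOn_abs_arg.isOpen_inter_preimage isOpen_compl_singleton isOpen_Iio

lemma not_isBounded_openSector {α : ℝ} (hα : 0 < α) : ¬IsBounded (openSector α) := by
  intro hbdd
  obtain ⟨C, hC_pos, hC⟩ := hbdd.exists_pos_norm_le
  have hmem : ((C + 1 : ℝ) : ℂ) ∈ openSector α := by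
    refine ⟨Complex.ofReal_ne_zero.2 (by positivity), ?_⟩
    rw [Complex.arg_ofReal_of_nonneg (by positivity), abs_zero]
    positivity
  have hle := hC _ hmem
  rw [Complex.norm_of_nonneg (by positivity)] at hle
  linarith

end Sector

theorem pderiv_sectorStable_of_multiaffine_general {σ : Type*} {U : σ → Set ℂ} {i : σ}
    (hU : ∀ j ≠ i, IsOpen (U j)) (hUi : ¬IsBounded (U i))
    {p : MvPolynomial σ ℂ} (hp : p.degreeOf i ≤ 1)
    (hstable : ∀ z : σ → ℂ, (∀ j, z j ∈ U j) → eval z p ≠ 0) :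
    pderiv i p = 0 ∨ ∀ z : σ → ℂ, (∀ j, z j ∈ U j) → eval z (pderiv i p) ≠ 0 := by
  classical
  refine or_iff_not_imp_left.2 fun hne w hw hzero ↦ ?_
  obtain ⟨v, hv⟩ := exists_finsupp_eval_add_ne_zero hne w
  have hconst : eval w (p - X i * pderiv i p) ≠ 0 := by simpa [hzero] using hstable w hw
  have hmem : ∀ᶠ t : ℂ in 𝓝 0, w + t • ⇑v ∈ ({i}ᶜ : Set σ).pi U :=
    eventually_add_smul_mem_pi (fun j hj ↦ (hU j hj).mem_nhds (hw j)) v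
  obtain ⟨t, ht, x, hx, hroot⟩ := exists_add_mul_eq_zero_of_analyticAt
    (analyticOnNhd_eval_add_smul (p - X i * pderiv i p) w v 0 (Set.mem_univ 0))
    (analyticOnNhd_eval_add_smul (pderiv i p) w v 0 (Set.mem_univ 0))
    (by simpa using hconst) (by simpa using hzero) (frequently_eval_add_smul_ne_zero hv) hmem hUi
  refine hstable (update (w + t • ⇑v) i x) ?_
    ((eval_update_of_degreeOf_le_one hp _ x).trans hroot)
  exact (forall_update_iff _ fun j y ↦ y ∈ U j).2 ⟨hx, ht⟩

/-- Partial derivatives of a multiaffine `Γ_α`-stable polynomial are either identically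
zero or `Γ_α`-stable. -/
theorem pderiv_sectorStable_of_multiaffine {n : ℕ} (α : ℝ) (hα0 : 0 < α) (hα2 : α ≤ 2)
    (p : MvPolynomial (Fin n) ℂ)
    (hma : ∀ m ∈ p.support, ∀ v, m v ≤ 1)
    (hstable : SectorStable α p) (i : Fin n) :
    MvPolynomial.pderiv i p = 0 ∨ SectorStable α (MvPolynomial.pderiv i p) :=
  pderiv_sectorStable_of_multiaffine_general (fun _ _ ↦ isOpen_openSector α)
    (not_isBounded_openSector hα0) (degreeOf_le_iff.2 fun m hm ↦ hma m hm i) hstable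
end

section
/- Let g(z₁,…,zₙ) = Σ_{S ⊆ [n]} c_S Π_{i∈S} z_i be a multiaffine polynomial with complex coefficients that is Γ_α-stable for some α ∈ (0,2]. Then its dual g*(z₁,…,zₙ) = Σ_{S ⊆ [n]} c_S Π_{i∉S} z_i is also Γ_α-stable. -/
open Finset

/-- `z` lies in the open sector `Γ_α` of aperture `απ` centered on the positive real axis. -/
def inSector (α : ℝ) (z : ℂ) : Prop := z ≠ 0 ∧ |z.arg| < α * Real.pi / 2

theorem inSector.inv {α : ℝ} {z : ℂ} (hz : inSector α z) : inSector α z⁻¹ :=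
  ⟨inv_ne_zero hz.1, (Complex.abs_arg_inv z).trans_lt hz.2⟩

section Dual

variable {ι K : Type*} [Fintype ι] [DecidableEq ι]

theorem prod_mul_prod_inv_eq_prod_compl [CommGroupWithZero K] {z : ι → K}
    (hz : ∀ i, z i ≠ 0) (S : Finset ι) :
    (∏ i, z i) * ∏ i ∈ S, (z i)⁻¹ = ∏ i ∈ Sᶜ, z i := by
  have hS : ∏ i ∈ S, z i ≠ 0 := prod_ne_zero_iff.mpr fun i _ => hz i
  rw [← prod_mul_prod_compl S z, prod_inv_distrib, mul_comm (∏ i ∈ S, z i),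
    mul_inv_cancel_right₀ hS]

theorem sum_mul_prod_compl_eq_prod_mul_sum_inv [Semifield K] (c : Finset ι → K) {z : ι → K}
    (hz : ∀ i, z i ≠ 0) :
    ∑ S, c S * ∏ i ∈ Sᶜ, z i = (∏ i, z i) * ∑ S, c S * ∏ i ∈ S, (z i)⁻¹ := by
  simp_rw [mul_sum, mul_left_comm, prod_mul_prod_inv_eq_prod_compl hz]

theorem dual_sectorStable_general [Semifield K] {U : ι → Set K} (hzero : ∀ i, 0 ∉ U i)
    (hinv : ∀ i, ∀ z ∈ U i, z⁻¹ ∈ U i) (c : Finset ι → K)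
    (hstable : ∀ z : ι → K, (∀ i, z i ∈ U i) → ∑ S, c S * ∏ i ∈ S, z i ≠ 0)
    (z : ι → K) (hz : ∀ i, z i ∈ U i) :
    ∑ S, c S * ∏ i ∈ Sᶜ, z i ≠ 0 := by
  have hz_ne : ∀ i, z i ≠ 0 := fun i => ne_of_mem_of_not_mem (hz i) (hzero i)
  rw [sum_mul_prod_compl_eq_prod_mul_sum_inv c hz_ne]
  exact mul_ne_zero (prod_ne_zero_iff.mpr fun i _ => hz_ne i)
    (hstable (fun i => (z i)⁻¹) fun i => hinv i (z i) (hz i))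

end Dual

/-- If the multiaffine polynomial `g = Σ_S c_S Π_{i∈S} z_i` is `Γ_α`-stable, then so is
its dual `g* = Σ_S c_S Π_{i∉S} z_i`. -/
theorem dual_sectorStable (n : ℕ) (α : ℝ) (hα0 : 0 < α) (hα2 : α ≤ 2)
    (c : Finset (Fin n) → ℂ)
    (hstable : ∀ z : Fin n → ℂ, (∀ i, inSector α (z i)) →
      (∑ S : Finset (Fin n), c S * ∏ i ∈ S, z i) ≠ 0) :
    ∀ z : Fin n → ℂ, (∀ i, inSector α (z i)) →
      (∑ S : Finset (Fin n), c S * ∏ i ∈ Sᶜ, z i) ≠ 0 :=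
  dual_sectorStable_general (U := fun _ => {z | inSector α z})
    (fun _ h => h.1 rfl) (fun _ _ h => h.inv) c hstable
end

section
/- Let α ∈ (0,1] and let f(z₁,…,zₙ) = Σ_{S ⊆ [n]} c_S Π_{i∈S} z_i be a multiaffine polynomial with nonnegative coefficients, not identically zero, that is Γ_α-stable. Then the homogenization f^hom(z₁,…,zₙ,w₁,…,wₙ) = Σ_{S ⊆ [n]} c_S · Π_{i∈S} z_i · Π_{i∉S} w_i is (α/2)-fractionally log-concave: the function (x,w) ↦ log f^hom(x₁^{α/2},…,xₙ^{α/2},w₁^{α/2},…,wₙ^{α/2}) is concave on ℝ_{>0}^{2n}. -/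
/-!
Write `f^hom(x, w) = ∑ S, F S`. Along a segment of the positive orthant, the second derivative of
`log f^hom(x^{α/2}, w^{α/2})` is nonpositive as soon as, for the random set `S` drawn with
probability proportional to `F S`, the covariance matrix of the events `i ∈ S` is at most `2 / α`
times its diagonal. By symmetry this follows from the row bounds
`∑ j ≠ i, |Cov(i, j)| ≤ (2 / α - 1) * Var(i)`.

For signs `ε j` with `ε i = 0`, put `B(s) = ∑ S ∋ i, F S * exp (s * ∑ j ∈ S, ε j)` and let `A(s)` be
the same sum over `S ∌ i`; then `∑ j, ε j * Cov(i, j)` is `Var(i)` times the derivative of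
`log (B / A)` at `0`. Substituting `z j = exp (s * ε j)` and `z i = exp v`, stability says that
`A(s) + exp v * B(s) ≠ 0` on the strips `|Im s|, |Im v| < δ := α * π / 2`. Hence `log (B / A)` maps
the strip of half-width `δ` into the strip of half-width `π - δ`, and the Schwarz lemma bounds its
derivative at `0` by `(π - δ) / δ = 2 / α - 1`.
-/

open Finset

theorem ne_zero_of_forall_add_pos_mul_ne_zero {U : Set ℂ} {A B : ℂ → ℂ} (hU : IsPreconnected U)
    (hUo : IsOpen U) (hA : DifferentiableOn ℂ A U) (hB : DifferentiableOn ℂ B U)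
    (hAB : ∀ s ∈ U, ∀ r : ℝ, 0 < r → A s + r * B s ≠ 0) {s₀ : ℂ} (hs₀ : s₀ ∈ U) (hB₀ : B s₀ ≠ 0)
    {s : ℂ} (hs : s ∈ U) : B s ≠ 0 := by
  intro hBs
  have hsum : ∀ z ∈ U, A z + B z ≠ 0 := fun z hz => by simpa using hAB z hz 1 one_pos
  -- Near a zero of `B`, the open map `B / (A + B)` takes a negative value `r`, where
  -- `A + ((r - 1) / r) * B` vanishes.
  have hP : AnalyticOnNhd ℂ (fun z => B z / (A z + B z)) U :=
    (hB.fun_div (hA.fun_add hB) hsum).analyticOnNhd hUo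
  obtain ⟨w, hw⟩ | hopen := hP.is_constant_or_isOpen hU
  · have hw_zero : w = 0 := by simpa [hBs] using (hw s hs).symm
    exact div_ne_zero hB₀ (hsum s₀ hs₀) ((hw s₀ hs₀).trans hw_zero)
  · have himage : (fun z => B z / (A z + B z)) '' U ∈ nhds ((0 : ℝ) : ℂ) :=
      (hopen U subset_rfl hUo).mem_nhds ⟨s, hs, by simp [hBs]⟩
    obtain ⟨r, ⟨z, hz, hzr⟩, hr⟩ :=
      (((Complex.continuous_ofReal.tendsto 0).mono_left nhdsWithin_le_nhds).eventually himage
        |>.and self_mem_nhdsWithin : ∀ᶠ r : ℝ in nhdsWithin 0 (Set.Iio 0), _ ∧ r ∈ Set.Iio 0).exists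
    have hr : r < 0 := hr
    have hr' : (r : ℂ) ≠ 0 := mod_cast hr.ne
    refine hAB z hz ((r - 1) / r) (div_pos_of_neg_of_neg (by linarith) hr) ?_
    rw [div_eq_iff (hsum z hz)] at hzr
    push_cast
    field_simp
    linear_combination -hzr

/-- The horizontal strip of half-width `δ` about the real axis, the image of the sector `Γ_α` under
the logarithm when `δ = α * π / 2 ≤ π`. -/
def horizontalStrip (δ : ℝ) : Set ℂ := {s | |s.im| < δ}

theorem isOpen_horizontalStrip (δ : ℝ) : IsOpen (horizontalStrip δ) :=
  isOpen_lt Complex.continuous_im.abs continuous_const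

theorem convex_horizontalStrip (δ : ℝ) : Convex ℝ (horizontalStrip δ) := by
  have hstrip : horizontalStrip δ = Complex.imLm ⁻¹' Set.Ioo (-δ) δ := by
    ext
    simp [horizontalStrip, abs_lt]
  rw [hstrip]
  exact (convex_Ioo _ _).linear_preimage _

theorem ofReal_mem_horizontalStrip {δ : ℝ} (hδ : 0 < δ) (x : ℝ) : (x : ℂ) ∈ horizontalStrip δ := by
  simpa [horizontalStrip]

theorem zero_mem_horizontalStrip {δ : ℝ} (hδ : 0 < δ) : (0 : ℂ) ∈ horizontalStrip δ := by
  simpa [horizontalStrip]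

theorem re_one_add_div_one_sub_pos {ξ : ℂ} (hξ : ‖ξ‖ < 1) : 0 < ((1 + ξ) / (1 - ξ)).re := by
  have hne : 1 - ξ ≠ 0 := sub_ne_zero.2 (by rintro rfl; simp at hξ)
  have hsq : Complex.normSq ξ < 1 := by
    rw [Complex.normSq_eq_norm_sq]; exact pow_lt_one₀ (norm_nonneg _) hξ two_ne_zero
  rw [Complex.div_re, ← add_div]
  refine div_pos ?_ (Complex.normSq_pos.2 hne)
  rw [Complex.normSq_apply] at hsq
  simp only [Complex.add_re, Complex.one_re, Complex.sub_re, Complex.add_im, Complex.one_im,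
    Complex.sub_im]
  linarith

theorem norm_sub_one_le_norm_add_one {w : ℂ} (hw : 0 ≤ w.re) : ‖w - 1‖ ≤ ‖w + 1‖ := by
  rw [← sq_le_sq₀ (norm_nonneg _) (norm_nonneg _), Complex.sq_norm, Complex.sq_norm,
    Complex.normSq_apply, Complex.normSq_apply]
  simp only [Complex.sub_re, Complex.one_re, Complex.sub_im, Complex.one_im, Complex.add_re,
    Complex.add_im]
  linarith

theorem norm_deriv_le_two_of_re_nonneg {F : ℂ → ℂ} (hF : DifferentiableOn ℂ F (Metric.ball 0 1))
    (hre : ∀ ξ ∈ Metric.ball (0 : ℂ) 1, 0 ≤ (F ξ).re) (h0 : F 0 = 1) : ‖deriv F 0‖ ≤ 2 := by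
  have hne : ∀ ξ ∈ Metric.ball (0 : ℂ) 1, F ξ + 1 ≠ 0 := fun ξ hξ h => by
    have := congrArg Complex.re h
    simp only [Complex.add_re, Complex.one_re, Complex.zero_re] at this
    linarith [hre ξ hξ]
  have hmaps : Set.MapsTo (fun ξ => (F ξ - 1) / (F ξ + 1)) (Metric.ball 0 1)
      (Metric.closedBall ((F 0 - 1) / (F 0 + 1)) 1) := fun ξ hξ => by
    rw [h0, sub_self, zero_div, mem_closedBall_zero_iff, norm_div]
    exact div_le_one_of_le₀ (norm_sub_one_le_norm_add_one (hre ξ hξ)) (norm_nonneg _)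
  have hderiv : HasDerivAt (fun ξ => (F ξ - 1) / (F ξ + 1)) (deriv F 0 / 2) 0 := by
    have hF0 := (hF.differentiableAt (Metric.ball_mem_nhds 0 one_pos)).hasDerivAt
    refine ((hF0.sub_const 1).fun_div (hF0.add_const 1) (hne 0 (by simp))).congr_deriv ?_
    rw [h0]
    ring
  have hschwarz := Complex.norm_deriv_le_div_of_mapsTo_ball
    ((hF.sub_const 1).fun_div (hF.add_const 1) hne) hmaps one_pos
  rw [hderiv.deriv, norm_div, Complex.norm_ofNat] at hschwarz
  linarith

/-- `discToStrip δ` maps the unit disc conformally onto `horizontalStrip δ`, fixing the origin. -/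
noncomputable def discToStrip (δ : ℝ) (ξ : ℂ) : ℂ :=
  (2 * δ / Real.pi : ℝ) * Complex.log ((1 + ξ) / (1 - ξ))

theorem discToStrip_mem_horizontalStrip {δ : ℝ} (hδ : 0 < δ) {ξ : ℂ} (hξ : ‖ξ‖ < 1) :
    discToStrip δ ξ ∈ horizontalStrip δ := by
  have harg : |((1 + ξ) / (1 - ξ)).arg| < Real.pi / 2 :=
    Complex.abs_arg_lt_pi_div_two_iff.2 (.inl (re_one_add_div_one_sub_pos hξ))
  have hpos : 0 < 2 * δ / Real.pi := by positivity
  calc |(discToStrip δ ξ).im| = 2 * δ / Real.pi * |((1 + ξ) / (1 - ξ)).arg| := by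
        rw [discToStrip, Complex.im_ofReal_mul, Complex.log_im, abs_mul, abs_of_pos hpos]
    _ < 2 * δ / Real.pi * (Real.pi / 2) := mul_lt_mul_of_pos_left harg hpos
    _ = δ := by field_simp

theorem differentiableOn_discToStrip (δ : ℝ) :
    DifferentiableOn ℂ (discToStrip δ) (Metric.ball 0 1) := by
  refine .const_mul (.clog (.fun_div (by fun_prop) (by fun_prop) fun ξ hξ => ?_) fun ξ hξ => ?_) _
  · exact sub_ne_zero.2 (by rintro rfl; simp at hξ)
  · exact .inl (re_one_add_div_one_sub_pos (mem_ball_zero_iff.1 hξ))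

theorem hasDerivAt_discToStrip (δ : ℝ) :
    HasDerivAt (discToStrip δ) (4 * δ / Real.pi : ℝ) 0 := by
  have hquot : HasDerivAt (fun ξ : ℂ => (1 + ξ) / (1 - ξ)) 2 0 := by
    refine (((hasDerivAt_id' (0 : ℂ)).const_add 1).fun_div ((hasDerivAt_id' (0 : ℂ)).const_sub 1)
      (by simp)).congr_deriv ?_
    norm_num
  refine ((hquot.clog (by simp)).const_mul ((2 * δ / Real.pi : ℝ) : ℂ)).congr_deriv ?_
  push_cast
  ring

theorem norm_deriv_le_div_of_mapsTo_horizontalStrip {G : ℂ → ℂ} {δ η : ℝ} (hδ : 0 < δ)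
    (hG : DifferentiableOn ℂ G (horizontalStrip δ)) (hη : ∀ s ∈ horizontalStrip δ, |(G s).im| ≤ η)
    (h0 : (G 0).im = 0) : ‖deriv G 0‖ ≤ η / δ := by
  rw [le_div_iff₀ hδ]
  -- `η` may vanish, so the right half-plane is reached from strips of half-width `θ > η`.
  refine le_of_forall_gt_imp_ge_of_dense fun θ hθ => ?_
  have hθ_pos : 0 < θ := (abs_nonneg _).trans_lt ((hη 0 (zero_mem_horizontalStrip hδ)).trans_lt hθ)
  have hκ : 0 < Real.pi / (2 * θ) := by positivity
  set F : ℂ → ℂ := fun ξ => Complex.exp ((Real.pi / (2 * θ) : ℝ) * (G (discToStrip δ ξ) - G 0))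
    with hF
  have hmem : Set.MapsTo (discToStrip δ) (Metric.ball 0 1) (horizontalStrip δ) := fun ξ hξ =>
    discToStrip_mem_horizontalStrip hδ (mem_ball_zero_iff.1 hξ)
  have hzero : discToStrip δ 0 = 0 := by simp [discToStrip]
  have hF_diff : DifferentiableOn ℂ F (Metric.ball 0 1) :=
    (((hG.comp (differentiableOn_discToStrip δ) hmem).sub_const _).const_mul _).cexp
  have hF_re : ∀ ξ ∈ Metric.ball (0 : ℂ) 1, 0 ≤ (F ξ).re := fun ξ hξ => by
    rw [hF, Complex.exp_re, Complex.im_ofReal_mul, Complex.sub_im, h0, sub_zero]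
    refine mul_nonneg (Real.exp_pos _).le (Real.cos_nonneg_of_mem_Icc (abs_le.1 ?_))
    calc |Real.pi / (2 * θ) * (G (discToStrip δ ξ)).im|
        = Real.pi / (2 * θ) * |(G (discToStrip δ ξ)).im| := by rw [abs_mul, abs_of_pos hκ]
      _ ≤ Real.pi / (2 * θ) * θ := by gcongr; exact (hη _ (hmem hξ)).trans hθ.le
      _ = Real.pi / 2 := by field_simp
  have hF_deriv : HasDerivAt F ((2 * δ / θ : ℝ) * deriv G 0) 0 := by
    have hG0 : HasDerivAt G (deriv G 0) (discToStrip δ 0) := by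
      rw [hzero]
      exact (hG.differentiableAt
        ((isOpen_horizontalStrip δ).mem_nhds (zero_mem_horizontalStrip hδ))).hasDerivAt
    refine (((hG0.comp 0 (hasDerivAt_discToStrip δ)).sub_const _).const_mul _).cexp.congr_deriv ?_
    simp only [Function.comp_apply, hzero, sub_self, mul_zero, Complex.exp_zero]
    push_cast
    field_simp
    ring
  have hbound := norm_deriv_le_two_of_re_nonneg hF_diff hF_re (by simp [hF, hzero])
  rw [hF_deriv.deriv, norm_mul, Complex.norm_of_nonneg (by positivity), div_mul_eq_mul_div,
    div_le_iff₀ hθ_pos] at hbound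
  linarith

theorem abs_arg_neg {z : ℂ} (hz : z ≠ 0) : |(-z).arg| = Real.pi - |z.arg| := by
  rw [← Complex.angle_one_left (neg_ne_zero.2 hz), InnerProductGeometry.angle_neg_right,
    Complex.angle_one_left hz]

theorem abs_arg_div_le {a b : ℂ} {δ : ℝ} (ha : a ≠ 0) (hb : b ≠ 0)
    (hab : ∀ v ∈ horizontalStrip δ, a + Complex.exp v * b ≠ 0) : |(b / a).arg| ≤ Real.pi - δ := by
  by_contra! hlt
  have hq : b / a ≠ 0 := div_ne_zero hb ha
  have harg : |(-(b / a)).arg| < δ := by linarith [abs_arg_neg hq]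
  refine hab (-Complex.log (-(b / a))) (by simpa [horizontalStrip, Complex.log_im] using harg) ?_
  rw [Complex.exp_neg, Complex.exp_log (neg_ne_zero.2 hq)]
  field_simp
  ring

open scoped ComplexOrder in
theorem norm_logDeriv_sub_logDeriv_le {A B : ℂ → ℂ} {δ : ℝ} (hδ : 0 < δ)
    (hA : DifferentiableOn ℂ A (horizontalStrip δ)) (hB : DifferentiableOn ℂ B (horizontalStrip δ))
    (hAB : ∀ s ∈ horizontalStrip δ, ∀ v ∈ horizontalStrip δ, A s + Complex.exp v * B s ≠ 0)
    (hA0 : 0 < A 0) (hB0 : 0 < B 0) :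
    ‖logDeriv B 0 - logDeriv A 0‖ ≤ (Real.pi - δ) / δ := by
  have h0 : (0 : ℂ) ∈ horizontalStrip δ := zero_mem_horizontalStrip hδ
  have hconn : IsPreconnected (horizontalStrip δ) := (convex_horizontalStrip δ).isPreconnected
  have hpencil : ∀ s ∈ horizontalStrip δ, ∀ r : ℝ, 0 < r → A s + r * B s ≠ 0 := fun s hs r hr => by
    simpa [← Complex.ofReal_exp, Real.exp_log hr] using
      hAB s hs (Real.log r) (ofReal_mem_horizontalStrip hδ _)
  have hB_ne : ∀ s ∈ horizontalStrip δ, B s ≠ 0 := fun s hs =>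
    ne_zero_of_forall_add_pos_mul_ne_zero hconn (isOpen_horizontalStrip δ) hA hB hpencil h0 hB0.ne'
      hs
  have hA_ne : ∀ s ∈ horizontalStrip δ, A s ≠ 0 := fun s hs => by
    refine ne_zero_of_forall_add_pos_mul_ne_zero hconn (isOpen_horizontalStrip δ) hB hA
      (fun z hz r hr h => hpencil z hz r⁻¹ (inv_pos.2 hr) ?_) h0 hA0.ne' hs
    have hr' : (r : ℂ) ≠ 0 := mod_cast hr.ne'
    push_cast
    field_simp
    linear_combination h
  have harg : ∀ s ∈ horizontalStrip δ, |(B s / A s).arg| ≤ Real.pi - δ := fun s hs =>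
    abs_arg_div_le (hA_ne s hs) (hB_ne s hs) (hAB s hs)
  have hslit : ∀ s ∈ horizontalStrip δ, B s / A s ∈ Complex.slitPlane := fun s hs =>
    Complex.mem_slitPlane_iff_arg.2 ⟨((le_abs_self _).trans (harg s hs)).trans_lt
      (sub_lt_self _ hδ) |>.ne, div_ne_zero (hB_ne s hs) (hA_ne s hs)⟩
  have hq : DifferentiableOn ℂ (fun s => B s / A s) (horizontalStrip δ) := hB.fun_div hA hA_ne
  have hlog0 : (Complex.log (B 0 / A 0)).im = 0 := by
    rw [Complex.log_im, Complex.arg_eq_zero_iff_zero_le]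
    exact (div_pos hB0 hA0).le
  have hnhds : horizontalStrip δ ∈ nhds 0 := (isOpen_horizontalStrip δ).mem_nhds h0
  have hlog_deriv : deriv (fun s => Complex.log (B s / A s)) 0 = logDeriv B 0 - logDeriv A 0 := by
    rw [← logDeriv_div 0 hB0.ne' hA0.ne' (hB.differentiableAt hnhds) (hA.differentiableAt hnhds)]
    exact ((hq.differentiableAt hnhds).hasDerivAt.clog (hslit 0 h0)).deriv
  rw [← hlog_deriv]
  exact norm_deriv_le_div_of_mapsTo_horizontalStrip hδ (hq.clog hslit)
    (by simpa only [Complex.log_im] using harg) hlog0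

section Covariance

variable {Ω R : Type*} [Fintype Ω] [CommRing R]

/-- The unnormalized covariance of two functions under the weights `p`: the covariance under the
probability distribution `p / ∑ x, p x`, multiplied by `(∑ x, p x) ^ 2`. -/
def covForm (p : Ω → R) : LinearMap.BilinForm R (Ω → R) :=
  LinearMap.mk₂ R
    (fun f g => (∑ x, p x) * ∑ x, p x * (f x * g x) - (∑ x, p x * f x) * ∑ x, p x * g x)
    (fun f₁ f₂ g => by simp only [Pi.add_apply, add_mul, mul_add, sum_add_distrib]; ring)
    (fun a f g => by
      simp only [Pi.smul_apply, smul_eq_mul, mul_assoc, mul_left_comm _ a, ← mul_sum]; ring)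
    (fun f g₁ g₂ => by simp only [Pi.add_apply, mul_add, sum_add_distrib]; ring)
    (fun a f g => by
      simp only [Pi.smul_apply, smul_eq_mul, mul_left_comm _ a, ← mul_sum]; ring)

theorem covForm_apply (p f g : Ω → R) : covForm p f g =
    (∑ x, p x) * ∑ x, p x * (f x * g x) - (∑ x, p x * f x) * ∑ x, p x * g x := rfl

theorem covForm_comm (p f g : Ω → R) : covForm p f g = covForm p g f := by
  simp only [covForm_apply, mul_comm (f _), mul_comm (∑ x, p x * f x)]

theorem covForm_const_left (p : Ω → R) (k : R) (g : Ω → R) : covForm p (fun _ => k) g = 0 := by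
  simp only [covForm_apply, ← sum_mul, mul_left_comm _ k, ← mul_sum]
  ring

theorem covForm_const_add (p : Ω → R) (k : R) (f : Ω → R) :
    covForm p ((fun _ => k) + f) ((fun _ => k) + f) = covForm p f f := by
  simp only [map_add, LinearMap.add_apply, covForm_const_left, covForm_comm p f fun _ => k,
    zero_add]

theorem covForm_ite (p g : Ω → R) (P : Ω → Prop) [DecidablePred P] :
    covForm p (fun x => if P x then 1 else 0) g =
      (∑ x with ¬P x, p x) * (∑ x with P x, p x * g x) -
        (∑ x with P x, p x) * ∑ x with ¬P x, p x * g x := by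
  simp only [covForm_apply, ite_mul, mul_ite, one_mul, zero_mul, mul_one, mul_zero, ← sum_filter]
  rw [← sum_filter_add_sum_filter_not univ P p,
    ← sum_filter_add_sum_filter_not univ P fun x => p x * g x]
  ring

theorem concaveOn_log_sum_of_covForm_le {D : Set ℝ} (hD : Convex ℝ D) {f ℓ m : Ω → ℝ → ℝ}
    (hpos : ∀ t ∈ D, 0 < ∑ x, f x t)
    (hf : ∀ x, ∀ t ∈ D, HasDerivAt (f x) (f x t * ℓ x t) t)
    (hℓ : ∀ x, ∀ t ∈ D, HasDerivAt (ℓ x) (-m x t) t)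
    (hcov : ∀ t ∈ D, covForm (f · t) (ℓ · t) (ℓ · t) ≤ (∑ x, f x t) * ∑ x, f x t * m x t) :
    ConcaveOn ℝ D fun t => Real.log (∑ x, f x t) := by
  have hsum : ∀ t ∈ D, HasDerivAt (fun t => ∑ x, f x t) (∑ x, f x t * ℓ x t) t := fun t ht =>
    HasDerivAt.fun_sum fun x _ => hf x t ht
  have hlog : ∀ t ∈ D, HasDerivAt (fun t => Real.log (∑ x, f x t))
      ((∑ x, f x t * ℓ x t) / ∑ x, f x t) t := fun t ht => (hsum t ht).log (hpos t ht).ne'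
  have hlog' : ∀ t ∈ D, HasDerivAt (fun t => (∑ x, f x t * ℓ x t) / ∑ x, f x t)
      ((covForm (f · t) (ℓ · t) (ℓ · t) - (∑ x, f x t) * ∑ x, f x t * m x t) /
        (∑ x, f x t) ^ 2) t := fun t ht => by
    refine ((HasDerivAt.fun_sum fun x _ => (hf x t ht).fun_mul (hℓ x t ht)).fun_div (hsum t ht)
      (hpos t ht).ne').congr_deriv ?_
    simp only [covForm_apply, mul_neg, mul_assoc, sum_add_distrib, sum_neg_distrib]
    ring
  refine concaveOn_of_hasDerivWithinAt2_nonpos hD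
    (fun t ht => (hlog t ht).continuousAt.continuousWithinAt)
    (fun t ht => (hlog t (interior_subset ht)).hasDerivWithinAt)
    (fun t ht => (hlog' t (interior_subset ht)).hasDerivWithinAt) fun t ht => ?_
  exact div_nonpos_of_nonpos_of_nonneg (sub_nonpos.2 (hcov t (interior_subset ht))) (sq_nonneg _)

end Covariance

theorem sum_sum_mul_mul_le_of_sum_abs_le {ι : Type*} [Fintype ι] {C : ι → ι → ℝ} {R : ι → ℝ}
    (hsymm : ∀ i j, C i j = C j i) (hrow : ∀ i, ∑ j, |C i j| ≤ R i) (d : ι → ℝ) :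
    ∑ i, ∑ j, d i * d j * C i j ≤ ∑ i, d i ^ 2 * R i := by
  have hterm : ∀ i j, d i * d j * C i j ≤ (d i ^ 2 * |C i j| + d j ^ 2 * |C j i|) / 2 :=
    fun i j => by
      have hamgm : |d i| * |d j| ≤ (d i ^ 2 + d j ^ 2) / 2 := by
        nlinarith [sq_nonneg (|d i| - |d j|), sq_abs (d i), sq_abs (d j)]
      calc d i * d j * C i j ≤ |d i| * |d j| * |C i j| := by
            rw [← abs_mul, ← abs_mul]; exact le_abs_self _
        _ ≤ (d i ^ 2 + d j ^ 2) / 2 * |C i j| := by gcongr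
        _ = (d i ^ 2 * |C i j| + d j ^ 2 * |C j i|) / 2 := by rw [hsymm j i]; ring
  calc ∑ i, ∑ j, d i * d j * C i j
      ≤ ∑ i, ∑ j, (d i ^ 2 * |C i j| + d j ^ 2 * |C j i|) / 2 := by gcongr; exact hterm _ _
    _ = ∑ i, d i ^ 2 * ∑ j, |C i j| := by
        simp only [add_div, sum_add_distrib, mul_sum]
        rw [sum_comm (f := fun i j => d j ^ 2 * |C j i| / 2)]
        simp only [← sum_add_distrib, add_halves]
    _ ≤ ∑ i, d i ^ 2 * R i := by gcongr; exact hrow _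

section ExponentialSum

variable {Ω : Type*} (p e : Ω → ℝ) (T : Finset Ω)

/-- The exponential sum `∑ x ∈ T, p x * exp (s * e x)` as an entire function of `s`. -/
noncomputable def expSum (s : ℂ) : ℂ := ∑ x ∈ T, (p x : ℂ) * Complex.exp (s * e x)

theorem differentiable_expSum : Differentiable ℂ (expSum p e T) := by
  unfold expSum
  fun_prop

theorem expSum_zero : expSum p e T 0 = (∑ x ∈ T, p x : ℝ) := by simp [expSum]

theorem logDeriv_expSum_zero :
    logDeriv (expSum p e T) 0 = ((∑ x ∈ T, p x * e x) / ∑ x ∈ T, p x : ℝ) := by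
  have hderiv : HasDerivAt (expSum p e T) (∑ x ∈ T, p x * e x : ℝ) 0 := by
    refine (HasDerivAt.fun_sum fun x _ =>
      (((hasDerivAt_id' (0 : ℂ)).mul_const (e x : ℂ)).cexp).const_mul (p x : ℂ)).congr_deriv ?_
    simp
  rw [logDeriv_apply, hderiv.deriv, expSum_zero, Complex.ofReal_div]

end ExponentialSum

theorem hasDerivAt_prod_of_hasDerivAt_mul {𝕜 κ : Type*} [NontriviallyNormedField 𝕜]
    {f : κ → 𝕜 → 𝕜} {l : κ → 𝕜} {t : 𝕜} {s : Finset κ}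
    (hf : ∀ i ∈ s, HasDerivAt (f i) (f i t * l i) t) :
    HasDerivAt (fun t => ∏ i ∈ s, f i t) ((∏ i ∈ s, f i t) * ∑ i ∈ s, l i) t := by
  classical
  refine (HasDerivAt.fun_finsetProd hf).congr_deriv ?_
  rw [mul_sum]
  refine sum_congr rfl fun i hi => ?_
  rw [smul_eq_mul, ← mul_assoc, prod_erase_mul s _ hi]

theorem hasDerivAt_rpow_of_hasDerivAt {x : ℝ → ℝ} {u t : ℝ} (hx : HasDerivAt x u t) (hne : x t ≠ 0)
    (β : ℝ) : HasDerivAt (fun t => x t ^ β) (x t ^ β * (β * u / x t)) t := by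
  refine (hx.rpow_const (.inl hne)).congr_deriv ?_
  rw [Real.rpow_sub_one hne]
  ring

theorem hasDerivAt_mul_div_of_hasDerivAt {x : ℝ → ℝ} {u t : ℝ} (hx : HasDerivAt x u t)
    (hne : x t ≠ 0) (β : ℝ) :
    HasDerivAt (fun t => β * u / x t) (-(1 / β * (β * u / x t) ^ 2)) t := by
  refine ((hasDerivAt_const t (β * u)).fun_div hx hne).congr_deriv ?_
  field_simp
  ring

theorem concaveOn_of_forall_lineMap {𝕜 E β : Type*} [Ring 𝕜] [PartialOrder 𝕜] [AddCommGroup E]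
    [Module 𝕜 E] [AddCommMonoid β] [PartialOrder β] [Module 𝕜 β] {s : Set E} {f : E → β}
    (hs : Convex 𝕜 s) (h : ∀ x ∈ s, ∀ y ∈ s,
      ConcaveOn 𝕜 (AffineMap.lineMap (k := 𝕜) x y ⁻¹' s) (f ∘ AffineMap.lineMap x y)) :
    ConcaveOn 𝕜 s f := by
  refine ⟨hs, fun x hx y hy a b ha hb hab => ?_⟩
  have hline := (h x hx y hy).2 (x := 0) (by simpa using hx) (y := 1) (by simpa using hy) ha hb hab
  have hab' : AffineMap.lineMap (k := 𝕜) x y b = a • x + b • y := by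
    rw [AffineMap.lineMap_apply_module, ← hab, add_sub_cancel_right]
  simpa [hab'] using hline

section SectorStable

variable {ι : Type*} [Fintype ι]

/-- The `Γ_α`-stability of the multiaffine polynomial `∑ S, c S * ∏ i ∈ S, z i`. -/
def IsSectorStable (α : ℝ) (c : Finset ι → ℝ) : Prop :=
  ∀ z : ι → ℂ, (∀ i, inSector α (z i)) → (∑ S : Finset ι, (c S : ℂ) * ∏ i ∈ S, z i) ≠ 0

theorem inSector_exp {α : ℝ} (hα : α ≤ 2) {s : ℂ} (hs : s ∈ horizontalStrip (α * Real.pi / 2)) :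
    inSector α (Complex.exp s) := by
  have hδ : α * Real.pi / 2 ≤ Real.pi := by nlinarith [Real.pi_pos]
  obtain ⟨hlow, hupp⟩ := abs_lt.1 (lt_of_lt_of_le hs hδ)
  refine ⟨Complex.exp_ne_zero s, ?_⟩
  rwa [← Complex.log_im, Complex.log_exp hlow hupp.le]

theorem inSector_ofReal_mul {α r : ℝ} (hr : 0 < r) {z : ℂ} (hz : inSector α z) :
    inSector α (r * z) :=
  ⟨mul_ne_zero (mod_cast hr.ne') hz.1, by rw [Complex.arg_real_mul z hr]; exact hz.2⟩

theorem IsSectorStable.sum_pos {α : ℝ} (hα : 0 < α) {c : Finset ι → ℝ} (hc : ∀ S, 0 ≤ c S)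
    (hstable : IsSectorStable α c) : 0 < ∑ S, c S := by
  have hone : inSector α 1 := ⟨one_ne_zero, by rw [Complex.arg_one, abs_zero]; positivity⟩
  have hne := hstable (fun _ => 1) fun _ => hone
  simp only [prod_const_one, mul_one, ← Complex.ofReal_sum, ne_eq, Complex.ofReal_eq_zero] at hne
  exact lt_of_le_of_ne (sum_nonneg fun S _ => hc S) (Ne.symm hne)

variable [DecidableEq ι]

/-- The terms of the homogenization `f^hom` of the multiaffine polynomial with coefficients `c`,
evaluated at `(x, w)`. -/
def homWeight (c : Finset ι → ℝ) (x w : ι → ℝ) (S : Finset ι) : ℝ :=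
  c S * ((∏ i ∈ S, x i) * ∏ i ∈ Sᶜ, w i)

theorem homWeight_nonneg {c : Finset ι → ℝ} (hc : ∀ S, 0 ≤ c S) {x w : ι → ℝ} (hx : ∀ i, 0 < x i)
    (hw : ∀ i, 0 < w i) (S : Finset ι) : 0 ≤ homWeight c x w S :=
  mul_nonneg (hc S) (mul_nonneg (prod_nonneg fun i _ => (hx i).le)
    (prod_nonneg fun i _ => (hw i).le))

theorem isSectorStable_homWeight {α : ℝ} {c : Finset ι → ℝ} (hstable : IsSectorStable α c)
    {x w : ι → ℝ} (hx : ∀ i, 0 < x i) (hw : ∀ i, 0 < w i) :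
    IsSectorStable α (homWeight c x w) := by
  intro z hz
  have hterm : ∀ S : Finset ι, (homWeight c x w S : ℂ) * ∏ i ∈ S, z i =
      (∏ i, (w i : ℂ)) * (c S * ∏ i ∈ S, ((x i / w i : ℝ) : ℂ) * z i) := fun S => by
    have hS : ∏ i ∈ S, (w i : ℂ) ≠ 0 := prod_ne_zero_iff.2 fun i _ => mod_cast (hw i).ne'
    rw [← prod_mul_prod_compl S]
    simp only [homWeight, Complex.ofReal_mul, Complex.ofReal_prod, Complex.ofReal_div,
      prod_mul_distrib, prod_div_distrib]
    field_simp
  simp only [hterm, ← mul_sum]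
  exact mul_ne_zero (prod_ne_zero_iff.2 fun i _ => mod_cast (hw i).ne')
    (hstable _ fun i => inSector_ofReal_mul (div_pos (hx i) (hw i)) (hz i))

/-- The indicator of the event `i ∈ S`, as a function of `S`. -/
def incidence (i : ι) (S : Finset ι) : ℝ := if i ∈ S then 1 else 0

theorem sum_smul_incidence (d : ι → ℝ) :
    ∑ i, d i • incidence i = fun S : Finset ι => ∑ i ∈ S, d i := by
  ext S
  simp [incidence]

theorem covForm_incidence (c g : Finset ι → ℝ) (i : ι) : covForm c (incidence i) g =
    (∑ S with i ∉ S, c S) * (∑ S with i ∈ S, c S * g S) -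
      (∑ S with i ∈ S, c S) * ∑ S with i ∉ S, c S * g S :=
  covForm_ite c g fun S => i ∈ S

theorem covForm_incidence_self (c : Finset ι → ℝ) (i : ι) :
    covForm c (incidence i) (incidence i) = (∑ S with i ∉ S, c S) * ∑ S with i ∈ S, c S := by
  have hin : ∑ S with i ∈ S, c S * incidence i S = ∑ S with i ∈ S, c S :=
    sum_congr rfl fun S hS => by rw [incidence, if_pos (mem_filter.1 hS).2, mul_one]
  have hout : ∑ S with i ∉ S, c S * incidence i S = 0 :=
    sum_eq_zero fun S hS => by rw [incidence, if_neg (mem_filter.1 hS).2, mul_zero]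
  rw [covForm_incidence, hin, hout, mul_zero, sub_zero]

theorem IsSectorStable.expSum_add_exp_mul_expSum_ne_zero {α : ℝ} (hα : α ≤ 2) {c : Finset ι → ℝ}
    (hstable : IsSectorStable α c) {i : ι} {ε : ι → ℝ} (hε : ∀ j, |ε j| ≤ 1) (hεi : ε i = 0)
    {s v : ℂ} (hs : s ∈ horizontalStrip (α * Real.pi / 2))
    (hv : v ∈ horizontalStrip (α * Real.pi / 2)) :
    expSum c (fun S => ∑ j ∈ S, ε j) {S | i ∉ S} s +
      Complex.exp v * expSum c (fun S => ∑ j ∈ S, ε j) {S | i ∈ S} s ≠ 0 := by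
  have hsector : ∀ j, inSector α (Complex.exp (s * ε j + if j = i then v else 0)) := fun j => by
    refine inSector_exp hα ?_
    rcases eq_or_ne j i with rfl | hji
    · simpa [hεi] using hv
    · rw [if_neg hji, add_zero, horizontalStrip, Set.mem_ofPred_eq, Complex.im_mul_ofReal, abs_mul]
      exact (mul_le_of_le_one_right (abs_nonneg _) (hε j)).trans_lt hs
  have hprod : ∀ S : Finset ι, ∏ j ∈ S, Complex.exp (s * ε j + if j = i then v else 0) =
      (if i ∈ S then Complex.exp v else 1) * Complex.exp (s * (∑ j ∈ S, ε j : ℝ)) := fun S => by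
    rw [← Complex.exp_sum, sum_add_distrib, sum_ite_eq', ← mul_sum, Complex.exp_add, mul_comm,
      Complex.ofReal_sum, apply_ite Complex.exp, Complex.exp_zero]
  convert hstable _ hsector using 1
  simp only [hprod, expSum, mul_sum, sum_filter, ← sum_add_distrib]
  refine sum_congr rfl fun S _ => ?_
  split_ifs <;> simp_all [mul_left_comm]

open scoped ComplexOrder in
theorem IsSectorStable.abs_mean_mem_sub_mean_notMem_le {α : ℝ} (hα0 : 0 < α) (hα : α ≤ 2)
    {c : Finset ι → ℝ} (hstable : IsSectorStable α c) {i : ι} {ε : ι → ℝ} (hε : ∀ j, |ε j| ≤ 1)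
    (hεi : ε i = 0) (hA : 0 < ∑ S with i ∉ S, c S) (hB : 0 < ∑ S with i ∈ S, c S) :
    |(∑ S with i ∈ S, c S * ∑ j ∈ S, ε j) / (∑ S with i ∈ S, c S) -
      (∑ S with i ∉ S, c S * ∑ j ∈ S, ε j) / ∑ S with i ∉ S, c S| ≤ 2 / α - 1 := by
  have hbound := norm_logDeriv_sub_logDeriv_le (by positivity)
    (differentiable_expSum c _ {S | i ∉ S}).differentiableOn
    (differentiable_expSum c _ {S | i ∈ S}).differentiableOn
    (fun s hs v hv => hstable.expSum_add_exp_mul_expSum_ne_zero hα hε hεi hs hv)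
    (by rw [expSum_zero]; exact mod_cast hA) (by rw [expSum_zero]; exact mod_cast hB)
  rw [logDeriv_expSum_zero, logDeriv_expSum_zero, ← Complex.ofReal_sub, Complex.norm_real,
    Real.norm_eq_abs] at hbound
  exact hbound.trans_eq (by field_simp)

theorem IsSectorStable.abs_covForm_incidence_sum_le {α : ℝ} (hα0 : 0 < α) (hα : α ≤ 2)
    {c : Finset ι → ℝ} (hc : ∀ S, 0 ≤ c S) (hstable : IsSectorStable α c) {i : ι} {ε : ι → ℝ}
    (hε : ∀ j, |ε j| ≤ 1) (hεi : ε i = 0) :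
    |covForm c (incidence i) (∑ j, ε j • incidence j)| ≤
      (2 / α - 1) * covForm c (incidence i) (incidence i) := by
  rw [sum_smul_incidence, covForm_incidence, covForm_incidence_self]
  have hvanish : ∀ T : Finset (Finset ι), ∑ S ∈ T, c S = 0 → ∑ S ∈ T, c S * ∑ j ∈ S, ε j = 0 :=
    fun T hT => sum_eq_zero fun S hS => by
      rw [(sum_eq_zero_iff_of_nonneg fun S _ => hc S).1 hT S hS, zero_mul]
  have hmean := hstable.abs_mean_mem_sub_mean_notMem_le hα0 hα hε hεi
  have hA_nonneg : 0 ≤ ∑ S with i ∉ S, c S := sum_nonneg fun S _ => hc S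
  have hB_nonneg : 0 ≤ ∑ S with i ∈ S, c S := sum_nonneg fun S _ => hc S
  have hA_vanish := hvanish {S | i ∉ S}
  have hB_vanish := hvanish {S | i ∈ S}
  generalize ∑ S with i ∉ S, c S = A at *
  generalize ∑ S with i ∈ S, c S = B at *
  generalize ∑ S with i ∉ S, c S * ∑ j ∈ S, ε j = A' at *
  generalize ∑ S with i ∈ S, c S * ∑ j ∈ S, ε j = B' at *
  rcases hA_nonneg.eq_or_lt with rfl | hA
  · simp [hA_vanish rfl]
  rcases hB_nonneg.eq_or_lt with rfl | hB
  · simp [hB_vanish rfl]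
  calc |A * B' - B * A'| = |B' / B - A' / A| * (A * B) := by
        conv_rhs => rw [← abs_of_pos (mul_pos hA hB), ← abs_mul]
        congr 1
        field_simp
    _ ≤ (2 / α - 1) * (A * B) := by gcongr; exact hmean hA hB

theorem IsSectorStable.sum_abs_covForm_incidence_le {α : ℝ} (hα0 : 0 < α) (hα : α ≤ 2)
    {c : Finset ι → ℝ} (hc : ∀ S, 0 ≤ c S) (hstable : IsSectorStable α c) (i : ι) :
    ∑ j, |covForm c (incidence i) (incidence j)| ≤
      2 / α * covForm c (incidence i) (incidence i) := by
  set ε : ι → ℝ := fun j =>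
    if j = i then 0 else SignType.sign (covForm c (incidence i) (incidence j)) with hε
  have hεi : ε i = 0 := by simp [hε]
  have hε_le : ∀ j, |ε j| ≤ 1 := fun j => by
    rcases eq_or_ne j i with rfl | hji
    · simp [hεi]
    · rcases lt_trichotomy (covForm c (incidence i) (incidence j)) 0 with h | h | h <;>
        simp [hε, hji, h]
  have hself : 0 ≤ covForm c (incidence i) (incidence i) := by
    rw [covForm_incidence_self]
    exact mul_nonneg (sum_nonneg fun S _ => hc S) (sum_nonneg fun S _ => hc S)
  have hsplit : ∑ j, |covForm c (incidence i) (incidence j)| =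
      covForm c (incidence i) (incidence i) +
        covForm c (incidence i) (∑ j, ε j • incidence j) := by
    simp only [map_sum, map_smul, smul_eq_mul]
    rw [← add_sum_erase _ _ (mem_univ i), ← add_sum_erase univ (fun j => ε j * _) (mem_univ i),
      hεi, zero_mul, zero_add, abs_of_nonneg hself]
    congr 1
    refine sum_congr rfl fun j hj => ?_
    simp only [hε, if_neg (ne_of_mem_erase hj), sign_mul_self]
  have hoff := (le_abs_self _).trans (hstable.abs_covForm_incidence_sum_le hα0 hα hc hε_le hεi)
  linarith

theorem sum_mul_sum_add_sum_compl (c : Finset ι → ℝ) (a b : ι → ℝ) :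
    ∑ S, c S * (∑ i ∈ S, a i + ∑ i ∈ Sᶜ, b i) =
      ∑ i, ((∑ S with i ∈ S, c S) * a i + (∑ S with i ∉ S, c S) * b i) := by
  have hsplit : ∀ S : Finset ι, ∑ i ∈ S, a i + ∑ i ∈ Sᶜ, b i = ∑ i, if i ∈ S then a i else b i :=
    fun S => by simp [sum_ite, filter_not, ← compl_eq_univ_sdiff]
  simp only [hsplit, mul_sum]
  rw [sum_comm]
  refine sum_congr rfl fun i _ => ?_
  rw [sum_mul, sum_mul, sum_filter, sum_filter, ← sum_add_distrib]
  refine sum_congr rfl fun S _ => ?_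
  split_ifs <;> simp_all

theorem sum_add_sum_compl_eq (a b : ι → ℝ) : (fun S : Finset ι => ∑ i ∈ S, a i + ∑ i ∈ Sᶜ, b i) =
    (fun _ => ∑ i, b i) + ∑ i, (a i - b i) • incidence i := by
  ext S
  simp only [sum_smul_incidence, Pi.add_apply, sum_sub_distrib]
  linarith [sum_add_sum_compl S b]

theorem IsSectorStable.covForm_sum_add_sum_compl_le {α : ℝ} (hα0 : 0 < α) (hα : α ≤ 2)
    {c : Finset ι → ℝ} (hc : ∀ S, 0 ≤ c S) (hstable : IsSectorStable α c) (a b : ι → ℝ) :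
    covForm c (fun S => ∑ i ∈ S, a i + ∑ i ∈ Sᶜ, b i) (fun S => ∑ i ∈ S, a i + ∑ i ∈ Sᶜ, b i) ≤
      2 / α * ((∑ S, c S) * ∑ S, c S * (∑ i ∈ S, a i ^ 2 + ∑ i ∈ Sᶜ, b i ^ 2)) := by
  have hterm : ∀ i, (a i - b i) ^ 2 * covForm c (incidence i) (incidence i) ≤
      (∑ S, c S) * ((∑ S with i ∈ S, c S) * a i ^ 2 + (∑ S with i ∉ S, c S) * b i ^ 2) :=
    fun i => by
      rw [covForm_incidence_self, ← sum_filter_add_sum_filter_not univ (fun S => i ∈ S) c]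
      nlinarith [sq_nonneg ((∑ S with i ∈ S, c S) * a i + (∑ S with i ∉ S, c S) * b i)]
  calc covForm c (fun S => ∑ i ∈ S, a i + ∑ i ∈ Sᶜ, b i)
        (fun S => ∑ i ∈ S, a i + ∑ i ∈ Sᶜ, b i)
      = ∑ i, ∑ j, (a i - b i) * (a j - b j) * covForm c (incidence i) (incidence j) := by
        rw [sum_add_sum_compl_eq, covForm_const_add]
        simp only [map_sum, map_smul, LinearMap.sum_apply, LinearMap.smul_apply, smul_eq_mul,
          mul_sum, mul_assoc]
        exact sum_congr rfl fun i _ => sum_congr rfl fun j _ => by rw [covForm_comm]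
    _ ≤ ∑ i, (a i - b i) ^ 2 * (2 / α * covForm c (incidence i) (incidence i)) :=
        sum_sum_mul_mul_le_of_sum_abs_le (fun i j => covForm_comm _ _ _)
          (hstable.sum_abs_covForm_incidence_le hα0 hα hc) _
    _ = 2 / α * ∑ i, (a i - b i) ^ 2 * covForm c (incidence i) (incidence i) := by
        simp only [mul_sum, mul_left_comm]
    _ ≤ 2 / α * ((∑ S, c S) * ∑ S, c S * (∑ i ∈ S, a i ^ 2 + ∑ i ∈ Sᶜ, b i ^ 2)) := by
        rw [sum_mul_sum_add_sum_compl, mul_sum (a := ∑ S, c S)]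
        exact mul_le_mul_of_nonneg_left (sum_le_sum fun i _ => hterm i) (by positivity)

theorem hasDerivAt_homWeight {x w : ι → ℝ → ℝ} {a b : ι → ℝ} {t : ℝ}
    (hx : ∀ i, HasDerivAt (x i) (x i t * a i) t) (hw : ∀ i, HasDerivAt (w i) (w i t * b i) t)
    (c : Finset ι → ℝ) (S : Finset ι) :
    HasDerivAt (fun t => homWeight c (x · t) (w · t) S)
      (homWeight c (x · t) (w · t) S * (∑ i ∈ S, a i + ∑ i ∈ Sᶜ, b i)) t := by
  refine (((hasDerivAt_prod_of_hasDerivAt_mul fun i _ => hx i).fun_mul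
    (hasDerivAt_prod_of_hasDerivAt_mul fun i _ => hw i)).const_mul (c S)).congr_deriv ?_
  rw [homWeight]
  ring

theorem IsSectorStable.concaveOn_log_sum_homWeight_rpow {α : ℝ} (hα0 : 0 < α) (hα : α ≤ 2)
    {c : Finset ι → ℝ} (hc : ∀ S, 0 ≤ c S) (hstable : IsSectorStable α c) {D : Set ℝ}
    (hD : Convex ℝ D) {x w : ι → ℝ → ℝ} {u v : ι → ℝ}
    (hx : ∀ t ∈ D, ∀ i, HasDerivAt (x i) (u i) t) (hw : ∀ t ∈ D, ∀ i, HasDerivAt (w i) (v i) t)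
    (hx_pos : ∀ t ∈ D, ∀ i, 0 < x i t) (hw_pos : ∀ t ∈ D, ∀ i, 0 < w i t) :
    ConcaveOn ℝ D fun t =>
      Real.log (∑ S, homWeight c (fun i => x i t ^ (α / 2)) (fun i => w i t ^ (α / 2)) S) := by
  have hx_rpow : ∀ t ∈ D, ∀ i, 0 < x i t ^ (α / 2) := fun t ht i =>
    Real.rpow_pos_of_pos (hx_pos t ht i) _
  have hw_rpow : ∀ t ∈ D, ∀ i, 0 < w i t ^ (α / 2) := fun t ht i =>
    Real.rpow_pos_of_pos (hw_pos t ht i) _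
  have hweight : ∀ t ∈ D, IsSectorStable α
      (homWeight c (fun i => x i t ^ (α / 2)) fun i => w i t ^ (α / 2)) := fun t ht =>
    isSectorStable_homWeight hstable (hx_rpow t ht) (hw_rpow t ht)
  have hweight_nonneg : ∀ t ∈ D, ∀ S,
      0 ≤ homWeight c (fun i => x i t ^ (α / 2)) (fun i => w i t ^ (α / 2)) S := fun t ht =>
    homWeight_nonneg hc (hx_rpow t ht) (hw_rpow t ht)
  let a : ι → ℝ → ℝ := fun i t => α / 2 * u i / x i t
  let b : ι → ℝ → ℝ := fun i t => α / 2 * v i / w i t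
  refine concaveOn_log_sum_of_covForm_le (ℓ := fun S t => ∑ i ∈ S, a i t + ∑ i ∈ Sᶜ, b i t)
    (m := fun S t => 2 / α * (∑ i ∈ S, a i t ^ 2 + ∑ i ∈ Sᶜ, b i t ^ 2)) hD
    (fun t ht => (hweight t ht).sum_pos hα0 (hweight_nonneg t ht))
    (fun S t ht => hasDerivAt_homWeight
      (fun i => hasDerivAt_rpow_of_hasDerivAt (hx t ht i) (hx_pos t ht i).ne' _)
      (fun i => hasDerivAt_rpow_of_hasDerivAt (hw t ht i) (hw_pos t ht i).ne' _) c S)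
    (fun S t ht => ?_) fun t ht => ?_
  · have ha : ∀ i, HasDerivAt (a i) _ t := fun i =>
      hasDerivAt_mul_div_of_hasDerivAt (hx t ht i) (hx_pos t ht i).ne' (α / 2)
    have hb : ∀ i, HasDerivAt (b i) _ t := fun i =>
      hasDerivAt_mul_div_of_hasDerivAt (hw t ht i) (hw_pos t ht i).ne' (α / 2)
    refine ((HasDerivAt.fun_sum fun i _ => ha i).fun_add
      (HasDerivAt.fun_sum fun i _ => hb i)).congr_deriv ?_
    simp only [sum_neg_distrib, ← mul_sum, one_div_div, a, b]
    ring
  · refine ((hweight t ht).covForm_sum_add_sum_compl_le hα0 hα (hweight_nonneg t ht) (a · t)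
      (b · t)).trans_eq ?_
    simp only [mul_left_comm _ (2 / α), ← mul_sum]

end SectorStable

theorem homogenization_fractionally_log_concave_general {ι : Type*} [Fintype ι] [DecidableEq ι]
    {α : ℝ} (hα0 : 0 < α) (hα : α ≤ 2) {c : Finset ι → ℝ} (hc : ∀ S, 0 ≤ c S)
    (hstable : IsSectorStable α c) :
    ConcaveOn ℝ {xw : (ι → ℝ) × (ι → ℝ) | (∀ i, 0 < xw.1 i) ∧ ∀ i, 0 < xw.2 i}
      fun xw => Real.log (∑ S : Finset ι,
        c S * ((∏ i ∈ S, xw.1 i ^ (α / 2)) * ∏ i ∈ Sᶜ, xw.2 i ^ (α / 2))) := by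
  have horthant : Convex ℝ {xw : (ι → ℝ) × (ι → ℝ) | (∀ i, 0 < xw.1 i) ∧ ∀ i, 0 < xw.2 i} :=
    fun p hp q hq a b ha hb hab =>
      ⟨fun i => convex_Ioi (0 : ℝ) (hp.1 i) (hq.1 i) ha hb hab,
        fun i => convex_Ioi (0 : ℝ) (hp.2 i) (hq.2 i) ha hb hab⟩
  refine concaveOn_of_forall_lineMap horthant fun p _ q _ => ?_
  have hline : ∀ t, HasDerivAt (AffineMap.lineMap (k := ℝ) p q) (q - p) t := fun t =>
    AffineMap.hasDerivAt_lineMap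
  exact hstable.concaveOn_log_sum_homWeight_rpow hα0 hα hc (horthant.affine_preimage _)
    (fun t _ => hasDerivAt_pi.1 (hline t).fst) (fun t _ => hasDerivAt_pi.1 (hline t).snd)
    (fun t ht => ht.1) fun t ht => ht.2

/-- If the multiaffine polynomial `f = Σ_S c_S z^S` with nonnegative coefficients, not
identically zero, is `Γ_α`-stable, then its homogenization
`f^hom(z, w) = Σ_S c_S (Π_{i∈S} z_i)(Π_{i∉S} w_i)` is `(α/2)`-fractionally log-concave:
`(x, w) ↦ log f^hom(x^{α/2}, w^{α/2})` is concave on the positive orthant of `ℝ^{2n}`. -/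
theorem homogenization_fractionally_log_concave (n : ℕ) (α : ℝ)
    (hα0 : 0 < α) (hα : α ≤ 1)
    (c : Finset (Fin n) → ℝ) (hc : ∀ S, 0 ≤ c S) (hne : ∃ S, c S ≠ 0)
    (hstable : ∀ z : Fin n → ℂ, (∀ i, inSector α (z i)) →
      (∑ S : Finset (Fin n), (c S : ℂ) * ∏ i ∈ S, z i) ≠ 0) :
    ConcaveOn ℝ {xw : (Fin n → ℝ) × (Fin n → ℝ) | (∀ i, 0 < xw.1 i) ∧ (∀ i, 0 < xw.2 i)}
      (fun xw => Real.log (∑ S : Finset (Fin n),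
        c S * ((∏ i ∈ S, xw.1 i ^ (α / 2)) * ∏ i ∈ Sᶜ, xw.2 i ^ (α / 2)))) := by
  exact homogenization_fractionally_log_concave_general hα0 (hα.trans one_le_two) hc hstable
end

section
/- Let α ∈ (0,1] and let μ be a probability distribution on subsets of [n] whose generating polynomial g_μ(z₁,…,zₙ) = Σ_{S⊆[n]} μ(S) Π_{i∈S} z_i is α-fractionally log-concave. Let μ(i) = Pr_{S∼μ}[i ∈ S] be the marginal probabilities. Then the entropy satisfies H(μ) ≥ α · Σ_{i=1}^{n} μ(i) log(1/μ(i)), with the convention 0·log(1/0) = 0. -/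
open Finset

/-! Put mass `μ S` on the point `x S = 1_S / μ(·)` of the orthant. The barycenter of these points is
`1`, where `log g_μ` vanishes, so Jensen's inequality gives `∑ S, μ S * log g_μ((x S) ^ α) ≤ 0`.
Keeping only the `S`-monomial of `g_μ` at `x S` bounds the left side from below by
`α * ∑ i, μ(i) * log (1 / μ(i)) - H(μ)`. Log-concavity is available only on the open orthant, so
`x S` is replaced by `(1_S + ε) / (μ(·) + ε)`; the barycenter is still `1`, and `ε` tends to `0`. -/

section FractionallyLogConcave

open Real Filter Topology

variable {ι : Type*} [Fintype ι] {μ : Finset ι → ℝ} {α ε : ℝ}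

/-- The generating polynomial `g_μ` of `μ`, encoded as the function `z ↦ g_μ(z)` rather than as an
`MvPolynomial` since only its values on the positive orthant matter. -/
def generatingPolynomial (μ : Finset ι → ℝ) (z : ι → ℝ) : ℝ :=
  ∑ S, μ S * ∏ i ∈ S, z i

/-- `α`-fractional log-concavity of `g_μ`, the input to Jensen's inequality; `Real.log` has no junk
value here as soon as `μ` is nonnegative and nonzero. -/
def IsFractionallyLogConcave (α : ℝ) (μ : Finset ι → ℝ) : Prop :=
  ConcaveOn ℝ {x : ι → ℝ | ∀ i, 0 < x i} fun x => log (generatingPolynomial μ fun i => x i ^ α)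

theorem generatingPolynomial_one (μ : Finset ι → ℝ) :
    generatingPolynomial μ (fun _ => 1) = ∑ S, μ S := by
  simp [generatingPolynomial]

theorem mul_prod_le_generatingPolynomial (hμ : ∀ S, 0 ≤ μ S) {z : ι → ℝ} (hz : ∀ i, 0 ≤ z i)
    (S : Finset ι) : μ S * ∏ i ∈ S, z i ≤ generatingPolynomial μ z :=
  single_le_sum (f := fun T => μ T * ∏ i ∈ T, z i)
    (fun T _ => mul_nonneg (hμ T) (prod_nonneg fun i _ => hz i)) (mem_univ S)

theorem log_add_sum_log_le_log_generatingPolynomial (hμ : ∀ S, 0 ≤ μ S) {z : ι → ℝ}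
    (hz : ∀ i, 0 < z i) {S : Finset ι} (hS : 0 < μ S) :
    log (μ S) + ∑ i ∈ S, log (z i) ≤ log (generatingPolynomial μ z) := by
  have hprod : 0 < ∏ i ∈ S, z i := prod_pos fun i _ => hz i
  calc log (μ S) + ∑ i ∈ S, log (z i)
      = log (μ S * ∏ i ∈ S, z i) := by
        rw [log_mul hS.ne' hprod.ne', log_prod fun i _ => (hz i).ne']
    _ ≤ log (generatingPolynomial μ z) :=
        log_le_log (mul_pos hS hprod) (mul_prod_le_generatingPolynomial hμ (fun i => (hz i).le) S)

theorem mul_sum_log_sub_negMulLog_le (hμ : ∀ S, 0 ≤ μ S) {z : ι → ℝ} (hz : ∀ i, 0 < z i)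
    (S : Finset ι) :
    μ S * ∑ i ∈ S, log (z i) - negMulLog (μ S) ≤ μ S * log (generatingPolynomial μ z) := by
  rcases (hμ S).eq_or_lt with hS | hS
  · simp [← hS]
  · calc μ S * ∑ i ∈ S, log (z i) - negMulLog (μ S)
        = μ S * (log (μ S) + ∑ i ∈ S, log (z i)) := by rw [negMulLog]; ring
      _ ≤ μ S * log (generatingPolynomial μ z) :=
          mul_le_mul_of_nonneg_left (log_add_sum_log_le_log_generatingPolynomial hμ hz hS) hS.le

namespace IsFractionallyLogConcave

theorem sum_mul_log_nonpos (h : IsFractionallyLogConcave α μ) (hμ : μ ∈ stdSimplex ℝ (Finset ι))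
    {x : Finset ι → ι → ℝ} (hx : ∀ S i, 0 < x S i) (hmean : ∑ S, μ S • x S = 1) :
    ∑ S, μ S * log (generatingPolynomial μ fun i => x S i ^ α) ≤ 0 := by
  have hJensen := h.le_map_sum (t := univ) (fun S _ => hμ.1 S) hμ.2 fun S _ => hx S
  simpa only [hmean, Pi.one_apply, one_rpow, generatingPolynomial_one, hμ.2, log_one,
    smul_eq_mul] using hJensen

theorem mul_sum_log_le_sum_negMulLog (h : IsFractionallyLogConcave α μ)
    (hμ : μ ∈ stdSimplex ℝ (Finset ι)) {x : Finset ι → ι → ℝ} (hx : ∀ S i, 0 < x S i)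
    (hmean : ∑ S, μ S • x S = 1) :
    α * ∑ S, μ S * ∑ i ∈ S, log (x S i) ≤ ∑ S, negMulLog (μ S) := by
  have hterm (S : Finset ι) : α * (μ S * ∑ i ∈ S, log (x S i)) - negMulLog (μ S) ≤
      μ S * log (generatingPolynomial μ fun i => x S i ^ α) := by
    have hmonomial :=
      mul_sum_log_sub_negMulLog_le hμ.1 (fun i => rpow_pos_of_pos (hx S i) α) S
    simp only [log_rpow (hx S _), ← mul_sum] at hmonomial
    rwa [mul_left_comm] at hmonomial
  have hsum := (sum_le_sum fun S (_ : S ∈ univ) => hterm S).trans (h.sum_mul_log_nonpos hμ hx hmean)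
  rw [sum_sub_distrib, ← mul_sum] at hsum
  exact sub_nonpos.mp hsum

end IsFractionallyLogConcave

variable [DecidableEq ι]

/-- The marginal `μ(i) = Pr_{S ∼ μ}[i ∈ S]`, for `μ` not necessarily normalized. -/
def marginal (μ : Finset ι → ℝ) (i : ι) : ℝ :=
  ∑ S with i ∈ S, μ S

theorem marginal_nonneg (hμ : ∀ S, 0 ≤ μ S) (i : ι) : 0 ≤ marginal μ i :=
  sum_nonneg fun S _ => hμ S

theorem sum_mul_sum_mem_eq_sum_marginal_mul (μ : Finset ι → ℝ) (c : ι → ℝ) :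
    ∑ S, μ S * ∑ i ∈ S, c i = ∑ i, marginal μ i * c i := by
  simp only [marginal, mul_sum, sum_mul]
  exact sum_comm' (by simp)

/-- The point `(1_S + ε) / (μ(·) + ε)` of the orthant at which Jensen's inequality is applied; the
shift by `ε` keeps it off the boundary. -/
noncomputable def smoothedIndicator (μ : Finset ι → ℝ) (ε : ℝ) (S : Finset ι) (i : ι) : ℝ :=
  ((if i ∈ S then 1 else 0) + ε) / (marginal μ i + ε)

theorem smoothedIndicator_pos (hμ : ∀ S, 0 ≤ μ S) (hε : 0 < ε) (S : Finset ι) (i : ι) :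
    0 < smoothedIndicator μ ε S i := by
  have hmarginal : 0 ≤ marginal μ i := marginal_nonneg hμ i
  unfold smoothedIndicator
  positivity

theorem sum_smul_smoothedIndicator (hμ : μ ∈ stdSimplex ℝ (Finset ι)) (hε : 0 < ε) :
    ∑ S, μ S • smoothedIndicator μ ε S = 1 := by
  funext i
  have hnum : ∑ S, μ S * ((if i ∈ S then 1 else 0) + ε) = marginal μ i + ε := by
    simp [marginal, mul_add, sum_add_distrib, sum_filter, ← sum_mul, hμ.2]
  have hden : marginal μ i + ε ≠ 0 := (add_pos_of_nonneg_of_pos (marginal_nonneg hμ.1 i) hε).ne'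
  simp only [Finset.sum_apply, Pi.smul_apply, smul_eq_mul, smoothedIndicator, ← mul_div_assoc,
    ← sum_div, hnum, div_self hden, Pi.one_apply]

theorem neg_log_le_log_smoothedIndicator (hμ : ∀ S, 0 ≤ μ S) (hε : 0 < ε) {S : Finset ι} {i : ι}
    (hi : i ∈ S) : -log (marginal μ i + ε) ≤ log (smoothedIndicator μ ε S i) := by
  have hden : 0 < marginal μ i + ε := add_pos_of_nonneg_of_pos (marginal_nonneg hμ i) hε
  rw [smoothedIndicator, if_pos hi, log_div (by positivity) hden.ne']
  linarith [log_nonneg (show 1 ≤ 1 + ε by linarith)]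

theorem IsFractionallyLogConcave.mul_sum_marginal_mul_neg_log_add_le
    (h : IsFractionallyLogConcave α μ) (hα : 0 ≤ α) (hμ : μ ∈ stdSimplex ℝ (Finset ι))
    (hε : 0 < ε) :
    α * ∑ i, marginal μ i * -log (marginal μ i + ε) ≤ ∑ S, negMulLog (μ S) :=
  calc α * ∑ i, marginal μ i * -log (marginal μ i + ε)
      = α * ∑ S, μ S * ∑ i ∈ S, -log (marginal μ i + ε) := by
        rw [sum_mul_sum_mem_eq_sum_marginal_mul]
    _ ≤ α * ∑ S, μ S * ∑ i ∈ S, log (smoothedIndicator μ ε S i) := by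
        gcongr with S _ i hi
        · exact hμ.1 S
        · exact neg_log_le_log_smoothedIndicator hμ.1 hε hi
    _ ≤ ∑ S, negMulLog (μ S) :=
        h.mul_sum_log_le_sum_negMulLog hμ (smoothedIndicator_pos hμ.1 hε)
          (sum_smul_smoothedIndicator hμ hε)

theorem tendsto_mul_neg_log_add_nhds_zero (m : ℝ) :
    Tendsto (fun ε => m * -log (m + ε)) (𝓝 0) (𝓝 (negMulLog m)) := by
  rcases eq_or_ne m 0 with rfl | hm
  · simp
  · have hcont : ContinuousAt (fun ε => m * -log (m + ε)) 0 := by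
      fun_prop (disch := simpa using hm)
    simpa [negMulLog] using hcont.tendsto

theorem entropy_lower_bound_of_fractionally_log_concave_general (hα : 0 ≤ α)
    (hμ : μ ∈ stdSimplex ℝ (Finset ι)) (h : IsFractionallyLogConcave α μ) :
    α * ∑ i, negMulLog (marginal μ i) ≤ ∑ S, negMulLog (μ S) := by
  have hlim : Tendsto (fun ε => α * ∑ i, marginal μ i * -log (marginal μ i + ε)) (𝓝[>] 0)
      (𝓝 (α * ∑ i, negMulLog (marginal μ i))) :=
    ((tendsto_finsetSum _ fun i _ => tendsto_mul_neg_log_add_nhds_zero _).const_mul α).mono_left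
      nhdsWithin_le_nhds
  refine le_of_tendsto hlim ?_
  filter_upwards [self_mem_nhdsWithin] with ε hε
  exact h.mul_sum_marginal_mul_neg_log_add_le hα hμ hε

end FractionallyLogConcave

/-- If the generating polynomial of the probability distribution `μ` on subsets of `[n]`
is `α`-fractionally log-concave, then the entropy of `μ` is at least `α` times the sum
of the marginal "entropies" `μ(i) log(1/μ(i))`. -/
theorem entropy_lower_bound_of_fractionally_log_concave (n : ℕ) (α : ℝ)
    (hα0 : 0 < α) (hα1 : α ≤ 1)
    (μ : Finset (Fin n) → ℝ) (hμ0 : ∀ S, 0 ≤ μ S)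
    (hμ1 : ∑ S : Finset (Fin n), μ S = 1)
    (hflc : ConcaveOn ℝ {x : Fin n → ℝ | ∀ i, 0 < x i}
      (fun x => Real.log (∑ S : Finset (Fin n), μ S * ∏ i ∈ S, x i ^ α))) :
    (∑ S : Finset (Fin n), μ S * Real.log (1 / μ S)) ≥
      α * ∑ i : Fin n,
        (∑ S ∈ univ.filter (fun S : Finset (Fin n) => i ∈ S), μ S) *
          Real.log (1 / ∑ S ∈ univ.filter (fun S : Finset (Fin n) => i ∈ S), μ S) := by
  simpa [marginal, Real.negMulLog] using
    entropy_lower_bound_of_fractionally_log_concave_general hα0.le ⟨hμ0, hμ1⟩ hflc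
end
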